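/- Let G be a noncomplete simple graph on vertex set [n], let s be an integer with 1 ≤ s < ω(G), and assume every vertex of G is contained in some s-clique. Suppose f_{s+1}(G,·) attains its maximum on S_s(G) at some point y with all coordinates strictly positive. Then for any two nonadjacent vertices u and v of G, there exists z = (z_1,...,z_n) ∈ S_s(G) such that f_{s+1}(G,z) = f_{s+1}(G,y) and z_u = 0. -/

import Mathlib

open Finset

/-- `fClique G s x` is the clique polynomial `f_s(G,x) = Σ_{S an s-clique of G} Π_{i ∈ S} x_i`. -/
def fClique {n : ℕ} (G : SimpleGraph (Fin n)) [DecidableRel G.Adj] (s : ℕ)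
    (x : Fin n → ℝ) : ℝ :=
  ∑ S ∈ G.cliqueFinset s, ∏ i ∈ S, x i

/-- Partial derivative of the clique polynomial with respect to coordinate `w`. -/
noncomputable def dClique {n : ℕ} (G : SimpleGraph (Fin n)) [DecidableRel G.Adj] (s : ℕ)
    (x : Fin n → ℝ) (w : Fin n) : ℝ :=
  ∑ S ∈ G.cliqueFinset s, if w ∈ S then ∏ i ∈ S.erase w, x i else 0

theorem fClique_shift {n : ℕ} (G : SimpleGraph (Fin n)) [DecidableRel G.Adj] (s : ℕ)
    (x : Fin n → ℝ) (u v : Fin n) (huv : u ≠ v) (hadj : ¬ G.Adj u v) (a b : ℝ) :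
    fClique G s (Function.update (Function.update x u (x u + a)) v (x v + b)) =
      fClique G s x + a * dClique G s x u + b * dClique G s x v := by
  unfold fClique dClique
  rw [Finset.mul_sum, Finset.mul_sum, ← Finset.sum_add_distrib, ← Finset.sum_add_distrib]
  refine Finset.sum_congr rfl fun S hS => ?_
  have hcl := (SimpleGraph.mem_cliqueFinset_iff.1 hS).isClique
  by_cases hu : u ∈ S
  · have hv : v ∉ S := fun hv => hadj (hcl hu hv huv)
    rw [← Finset.mul_prod_erase S _ hu, ← Finset.mul_prod_erase S x hu]
    have : ∏ i ∈ S.erase u, Function.update (Function.update x u (x u + a)) v (x v + b) i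
        = ∏ i ∈ S.erase u, x i := by
      refine Finset.prod_congr rfl fun i hi => ?_
      have h1 : i ≠ u := (Finset.mem_erase.1 hi).1
      have h2 : i ≠ v := fun h => hv (h ▸ (Finset.mem_erase.1 hi).2)
      simp [h1, h2]
    rw [this]
    simp [hu, hv, huv]
    ring
  · by_cases hv : v ∈ S
    · rw [← Finset.mul_prod_erase S _ hv, ← Finset.mul_prod_erase S x hv]
      have : ∏ i ∈ S.erase v, Function.update (Function.update x u (x u + a)) v (x v + b) i
          = ∏ i ∈ S.erase v, x i := by
        refine Finset.prod_congr rfl fun i hi => ?_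
        have h1 : i ≠ v := (Finset.mem_erase.1 hi).1
        have h2 : i ≠ u := fun h => hu (h ▸ (Finset.mem_erase.1 hi).2)
        simp [h1, h2]
      rw [this]
      simp [hu, hv]
      ring
    · simp only [hu, hv, if_false, mul_zero, add_zero]
      refine Finset.prod_congr rfl fun i hi => ?_
      have h1 : i ≠ v := fun h => hv (h ▸ hi)
      have h2 : i ≠ u := fun h => hu (h ▸ hi)
      simp [h1, h2]

theorem dClique_pos {n : ℕ} (G : SimpleGraph (Fin n)) [DecidableRel G.Adj] (s : ℕ)
    (y : Fin n → ℝ) (hy : ∀ i, 0 < y i) (w : Fin n)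
    (h : ∃ S ∈ G.cliqueFinset s, w ∈ S) : 0 < dClique G s y w := by
  obtain ⟨S, hS, hw⟩ := h
  refine Finset.sum_pos' (fun T _ => ?_) ⟨S, hS, ?_⟩
  · split_ifs
    · exact Finset.prod_nonneg fun i _ => (hy i).le
    · exact le_rfl
  · rw [if_pos hw]
    exact Finset.prod_pos fun i _ => hy i

/-- Lemma 2: if `G` is noncomplete, `1 ≤ s < ω(G)`, every vertex lies in some `s`-clique,
and `f_{s+1}(G,·)` attains its maximum on `S_s(G)` at a strictly positive point `y`, then
for any nonadjacent vertices `u, v` there is `z ∈ S_s(G)` with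
`f_{s+1}(G,z) = f_{s+1}(G,y)` and `z_u = 0`. -/
theorem zero_coordinate_max {n : ℕ} (G : SimpleGraph (Fin n)) [DecidableRel G.Adj]
    (hnc : G ≠ ⊤) (s : ℕ) (hs : 1 ≤ s) (hsw : s < G.cliqueNum)
    (hcov : ∀ v : Fin n, ∃ S ∈ G.cliqueFinset s, v ∈ S)
    (y : Fin n → ℝ) (hy : ∀ i, 0 < y i) (hy1 : fClique G s y = 1)
    (hmax : ∀ x : Fin n → ℝ, (∀ i, 0 ≤ x i) → fClique G s x = 1 →
      fClique G (s + 1) x ≤ fClique G (s + 1) y)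
    (u v : Fin n) (huv : u ≠ v) (hadj : ¬ G.Adj u v) :
    ∃ z : Fin n → ℝ, (∀ i, 0 ≤ z i) ∧ fClique G s z = 1 ∧
      fClique G (s + 1) z = fClique G (s + 1) y ∧ z u = 0 := by
  have hA := dClique_pos G s y hy u (hcov u)
  have hB := dClique_pos G s y hy v (hcov v)
  set A := dClique G s y u
  set B := dClique G s y v
  set A' := dClique G (s + 1) y u with hA'
  set B' := dClique G (s + 1) y v with hB'
  let z : ℝ → Fin n → ℝ := fun t =>
    Function.update (Function.update y u (y u + -(t * B))) v (y v + t * A)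
  have hz0 : ∀ t, t * B ≤ y u → 0 ≤ y v + t * A → ∀ i, 0 ≤ z t i := by
    intro t h1 h2 i
    by_cases hv : i = v
    · subst hv; simpa [z] using h2
    · by_cases hu : i = u
      · subst hu; simp [z, huv]; linarith
      · simpa [z, hu, hv] using (hy i).le
  have hz1 : ∀ t, fClique G s (z t) = 1 := by
    intro t
    have := fClique_shift G s y u v huv hadj (-(t * B)) (t * A)
    simp only [z]
    rw [this, hy1]
    ring
  have hz2 : ∀ t, fClique G (s + 1) (z t) = fClique G (s + 1) y + t * (A * B' - B * A') := by
    intro t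
    have := fClique_shift G (s + 1) y u v huv hadj (-(t * B)) (t * A)
    simp only [z]
    rw [this]
    ring
  have hp : 0 < y u / B := div_pos (hy u) hB
  have hq : 0 < y v / A := div_pos (hy v) hA
  have hpB : y u / B * B = y u := div_mul_cancel₀ _ hB.ne'
  have hqA : y v / A * A = y v := div_mul_cancel₀ _ hA.ne'
  have hnp : ∀ i, 0 ≤ z (y u / B) i :=
    hz0 _ hpB.le (add_nonneg (hy v).le (mul_pos hp hA).le)
  have h1 := hmax (z (y u / B)) hnp (hz1 _)
  have h2 := hmax (z (-(y v / A)))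
    (hz0 _ (by nlinarith [mul_pos hq hB, hy u]) (by linarith)) (hz1 _)
  rw [hz2] at h1 h2
  have hD : A * B' - B * A' = 0 := by
    apply le_antisymm
    · by_contra h
      push Not at h
      nlinarith [mul_pos hp h]
    · by_contra h
      push Not at h
      nlinarith [mul_pos_of_neg_of_neg (neg_neg_of_pos hq) h]
  refine ⟨z (y u / B), hnp, hz1 _, by rw [hz2, hD]; ring, ?_⟩
  simp [z, huv, hpB]
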